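/- For all integers m, n ≥ 2 and every edge e of C_{2m} ∨ O_{2n−1}, χ_la((C_{2m} ∨ O_{2n−1}) − e) = 3. -/

import Mathlib

open Finset SimpleGraph
open scoped Classical

/-- The induced vertex label (weight) of `x`: the sum of `f` over all edges incident to `x`. -/
noncomputable def vertexWeight {V : Type*} [Fintype V] (G : SimpleGraph V)
    (f : Sym2 V → ℕ) (x : V) : ℕ :=
  ∑ e ∈ G.edgeFinset.filter (fun e => x ∈ e), f e

/-- `f` is a local antimagic labeling of `G`: it restricts to a bijection from the edge set of
`G` onto `{1, …, q}` (where `q` is the number of edges), and adjacent vertices get distinct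
induced vertex labels. -/
def IsLocalAntimagic {V : Type*} [Fintype V] (G : SimpleGraph V) (f : Sym2 V → ℕ) : Prop :=
  Set.BijOn f G.edgeSet (Set.Icc 1 G.edgeSet.ncard) ∧
  ∀ ⦃x y : V⦄, G.Adj x y → vertexWeight G f x ≠ vertexWeight G f y

/-- The number of distinct induced vertex labels, `c(f)`. -/
noncomputable def colorCount {V : Type*} [Fintype V] (G : SimpleGraph V)
    (f : Sym2 V → ℕ) : ℕ :=
  (Finset.univ.image (vertexWeight G f)).card

/-- The local antimagic chromatic number `χ_la(G)`. -/
noncomputable def chiLA {V : Type*} [Fintype V] (G : SimpleGraph V) : ℕ :=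
  sInf { n | ∃ f : Sym2 V → ℕ, IsLocalAntimagic G f ∧ colorCount G f = n }

/-- The join `G ∨ H` of two vertex-disjoint graphs. -/
def joinG {α β : Type*} (G : SimpleGraph α) (H : SimpleGraph β) : SimpleGraph (α ⊕ β) :=
  SimpleGraph.fromRel (fun x y =>
    (∃ a b, x = Sum.inl a ∧ y = Sum.inl b ∧ G.Adj a b) ∨
    (∃ a b, x = Sum.inr a ∧ y = Sum.inr b ∧ H.Adj a b) ∨
    (∃ a b, x = Sum.inl a ∧ y = Sum.inr b))


/-- Index type for the edges of the join: cycle edges and spokes. -/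
abbrev EIdx (p r : ℕ) := Fin p ⊕ (Fin p × Fin r)

/-- The edge of the join with a given index. -/
def edgeOf (p r : ℕ) [NeZero p] : EIdx p r → Sym2 (Fin p ⊕ Fin r)
  | Sum.inl i => s(Sum.inl i, Sum.inl (i + 1))
  | Sum.inr x => s(Sum.inl x.1, Sum.inr x.2)

/-- The join graph `C_p ∨ O_r`. -/
abbrev JG (p r : ℕ) : SimpleGraph (Fin p ⊕ Fin r) :=
  joinG (cycleGraph p) (⊥ : SimpleGraph (Fin r))

lemma fin_one_val (p : ℕ) [NeZero p] (hp : 3 ≤ p) : ((1 : Fin p) : ℕ) = 1 := by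
  rw [Fin.coe_ofNat_eq_mod]
  exact Nat.mod_eq_of_lt (by omega)

lemma fin_succ_val (p : ℕ) [NeZero p] (hp : 3 ≤ p) (i : Fin p) :
    ((i + 1 : Fin p) : ℕ) = if (i : ℕ) + 1 = p then 0 else (i : ℕ) + 1 := by
  rw [Fin.val_add, fin_one_val p hp]
  have := i.2
  split_ifs with h
  · rw [h, Nat.mod_self]
  · exact Nat.mod_eq_of_lt (by omega)

lemma cyc_adj (p : ℕ) [NeZero p] (hp : 3 ≤ p) (u v : Fin p) :
    (cycleGraph p).Adj u v ↔ v = u + 1 ∨ u = v + 1 := by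
  rw [cycleGraph_adj']
  have h1 := fin_one_val p hp
  have key : ∀ a b : Fin p, (a - b).val = 1 ↔ a = b + 1 := by
    intro a b
    rw [← h1, Fin.val_inj, sub_eq_iff_eq_add, add_comm]
  rw [key, key, or_comm]

lemma edgeOf_injective (p r : ℕ) [NeZero p] (hp : 3 ≤ p) : Function.Injective (edgeOf p r) := by
  rintro (i | ⟨i, j⟩) (k | ⟨k, l⟩) h
  · simp only [edgeOf, Sym2.eq_iff, Sum.inl.injEq] at h
    rcases h with ⟨h, -⟩ | ⟨h1, h2⟩
    · rw [h]
    · exfalso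
      have e1 := fin_succ_val p hp i
      have e2 := fin_succ_val p hp k
      rw [h2] at e1
      rw [← h1] at e2
      have := i.2
      have := k.2
      split_ifs at e1 e2 <;> omega
  · simp [edgeOf] at h
  · simp [edgeOf] at h
  · simp [edgeOf] at h
    rw [h.1, h.2]

lemma edgeOf_range (p r : ℕ) [NeZero p] (hp : 3 ≤ p) (e : Sym2 (Fin p ⊕ Fin r)) :
    e ∈ (JG p r).edgeSet ↔ ∃ x, edgeOf p r x = e := by
  induction e using Sym2.ind with
  | _ u v =>
  have hne : ∀ i : Fin p, i + 1 ≠ i := by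
    intro i h
    have e1 := fin_succ_val p hp i
    rw [h] at e1
    have := i.2
    split_ifs at e1 <;> omega
  rcases u with a | a <;> rcases v with b | b <;>
    simp [JG, joinG, edgeOf, cyc_adj p hp]
  · constructor
    · rintro ⟨h, (h' | h') | (h' | h')⟩
      · exact ⟨a, Or.inl ⟨rfl, h'.symm⟩⟩
      · exact ⟨b, Or.inr ⟨rfl, h'.symm⟩⟩
      · exact ⟨b, Or.inr ⟨rfl, h'.symm⟩⟩
      · exact ⟨a, Or.inl ⟨rfl, h'.symm⟩⟩
    · rintro ⟨x, ⟨rfl, rfl⟩ | ⟨rfl, rfl⟩⟩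
      · exact ⟨fun h => hne _ h.symm, by simp⟩
      · exact ⟨fun h => hne _ h, by simp⟩

/-- The labeling of edges attached to a labeling of indices. -/
noncomputable def extLabel (p r : ℕ) [NeZero p] (l : EIdx p r → ℕ) : Sym2 (Fin p ⊕ Fin r) → ℕ :=
  Function.extend (edgeOf p r) l (fun _ => 0)

lemma weight_eq (p r : ℕ) [NeZero p] (hp : 3 ≤ p) (l : EIdx p r → ℕ) (x₀ : EIdx p r)
    (h0 : l x₀ = 0) (v : Fin p ⊕ Fin r) :
    vertexWeight ((JG p r).deleteEdges {edgeOf p r x₀}) (extLabel p r l) v =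
      ∑ x : EIdx p r, if v ∈ edgeOf p r x then l x else 0 := by
  have hinj := edgeOf_injective p r hp
  unfold vertexWeight
  have hs : (((JG p r).deleteEdges {edgeOf p r x₀}).edgeFinset.filter (fun e => v ∈ e)) =
      ((Finset.univ.filter (fun x => x ≠ x₀ ∧ v ∈ edgeOf p r x)).image (edgeOf p r)) := by
    ext e
    simp only [Finset.mem_filter, mem_edgeFinset, edgeSet_deleteEdges, Set.mem_sdiff,
      edgeOf_range p r hp, Set.mem_singleton_iff, Finset.mem_image, Finset.mem_univ, true_and]
    constructor
    · rintro ⟨⟨⟨x, rfl⟩, h⟩, h'⟩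
      exact ⟨x, ⟨fun hx => h (by rw [hx]), h'⟩, rfl⟩
    · rintro ⟨x, ⟨h, h'⟩, rfl⟩
      exact ⟨⟨⟨x, rfl⟩, fun hx => h (hinj hx)⟩, h'⟩
  refine (Finset.sum_congr (Eq.trans ?_ hs) (fun _ _ => rfl)).trans ?_
  · ext e
    simp only [Finset.mem_filter, mem_edgeFinset]
  rw [Finset.sum_image (fun a _ b _ h => hinj h), Finset.sum_filter]
  apply Finset.sum_congr rfl
  intro x _
  simp only [extLabel, hinj.extend_apply]
  by_cases hx : x = x₀
  · subst hx; simp [h0]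
  · simp [hx]

lemma weight_inl (p r : ℕ) [NeZero p] (hp : 3 ≤ p) (l : EIdx p r → ℕ) (x₀ : EIdx p r)
    (h0 : l x₀ = 0) (i : Fin p) :
    vertexWeight ((JG p r).deleteEdges {edgeOf p r x₀}) (extLabel p r l) (Sum.inl i) =
      l (Sum.inl i) + l (Sum.inl (i - 1)) + ∑ j, l (Sum.inr (i, j)) := by
  have hne : i - 1 ≠ i := by
    intro h
    have e1 := fin_succ_val p hp (i - 1)
    rw [sub_add_cancel, h] at e1
    have := i.2
    split_ifs at e1 <;> omega
  rw [weight_eq p r hp l x₀ h0, Fintype.sum_sum_type, Fintype.sum_prod_type]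
  congr 1
  · have : ∀ k : Fin p, (if (Sum.inl i : Fin p ⊕ Fin r) ∈ edgeOf p r (Sum.inl k) then l (Sum.inl k) else 0)
      = (if k = i then l (Sum.inl k) else 0) + (if k = i - 1 then l (Sum.inl k) else 0) := by
      intro k
      simp only [edgeOf, Sym2.mem_iff, Sum.inl.injEq]
      by_cases h1 : k = i
      · subst h1
        simp [hne.symm]
      · by_cases h2 : k = i - 1
        · subst h2
          simp [hne]
        · have : ¬ (i = k + 1) := fun h => h2 (by rw [h]; simp)
          simp [h1, h2, this, Ne.symm h1]
    simp only [this, Finset.sum_add_distrib, Finset.sum_ite_eq', Finset.mem_univ, if_true]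
  · rw [Finset.sum_eq_single i]
    · simp [edgeOf]
    · intro k _ hk
      simp [edgeOf, Ne.symm hk]
    · simp

lemma weight_inr (p r : ℕ) [NeZero p] (hp : 3 ≤ p) (l : EIdx p r → ℕ) (x₀ : EIdx p r)
    (h0 : l x₀ = 0) (j : Fin r) :
    vertexWeight ((JG p r).deleteEdges {edgeOf p r x₀}) (extLabel p r l) (Sum.inr j) =
      ∑ i, l (Sum.inr (i, j)) := by
  rw [weight_eq p r hp l x₀ h0, Fintype.sum_sum_type, Fintype.sum_prod_type]
  simp [edgeOf]

lemma ncard_edges (p r : ℕ) [NeZero p] (hp : 3 ≤ p) (x₀ : EIdx p r) :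
    ((JG p r).deleteEdges {edgeOf p r x₀}).edgeSet.ncard = p + p * r - 1 := by
  have hinj := edgeOf_injective p r hp
  have : ((JG p r).deleteEdges {edgeOf p r x₀}).edgeSet = edgeOf p r '' ({x₀}ᶜ : Set _) := by
    ext e
    simp only [edgeSet_deleteEdges, Set.mem_sdiff, edgeOf_range p r hp, Set.mem_singleton_iff,
      Set.mem_image, Set.mem_compl_iff]
    constructor
    · rintro ⟨⟨x, rfl⟩, h⟩
      exact ⟨x, fun hx => h (by rw [hx]), rfl⟩
    · rintro ⟨x, h, rfl⟩
      exact ⟨⟨x, rfl⟩, fun hx => h (hinj hx)⟩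
  rw [this, Set.ncard_image_of_injective _ hinj, Set.ncard_compl]
  simp

lemma bij_label (p r : ℕ) [NeZero p] (hp : 3 ≤ p) (l : EIdx p r → ℕ) (x₀ : EIdx p r)
    (h0 : l x₀ = 0) (hl : Function.Injective l) (hb : ∀ x, l x < p + p * r) :
    Set.BijOn (extLabel p r l) ((JG p r).deleteEdges {edgeOf p r x₀}).edgeSet
      (Set.Icc 1 ((JG p r).deleteEdges {edgeOf p r x₀}).edgeSet.ncard) := by
  have hinj := edgeOf_injective p r hp
  have hform : ∀ e ∈ ((JG p r).deleteEdges {edgeOf p r x₀}).edgeSet,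
      ∃ x, x ≠ x₀ ∧ edgeOf p r x = e := by
    intro e he
    rw [edgeSet_deleteEdges, Set.mem_sdiff, edgeOf_range p r hp] at he
    obtain ⟨⟨x, rfl⟩, h⟩ := he
    exact ⟨x, fun hx => h (by rw [hx]; rfl), rfl⟩
  have hmaps : Set.MapsTo (extLabel p r l) ((JG p r).deleteEdges {edgeOf p r x₀}).edgeSet
      (Set.Icc 1 ((JG p r).deleteEdges {edgeOf p r x₀}).edgeSet.ncard) := by
    intro e he
    obtain ⟨x, hx, rfl⟩ := hform e he
    rw [ncard_edges p r hp, extLabel, hinj.extend_apply]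
    have h1 := hb x
    have h2 : l x ≠ 0 := fun h => hx (hl (h.trans h0.symm))
    exact ⟨by omega, by omega⟩
  have hinjon : Set.InjOn (extLabel p r l) ((JG p r).deleteEdges {edgeOf p r x₀}).edgeSet := by
    intro e he e' he' h
    obtain ⟨x, hx, rfl⟩ := hform e he
    obtain ⟨y, hy, rfl⟩ := hform e' he'
    rw [extLabel, hinj.extend_apply, hinj.extend_apply] at h
    rw [hl h]
  refine ⟨hmaps, hinjon, ?_⟩
  have himg : (extLabel p r l) '' ((JG p r).deleteEdges {edgeOf p r x₀}).edgeSet =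
      Set.Icc 1 ((JG p r).deleteEdges {edgeOf p r x₀}).edgeSet.ncard := by
    apply Set.eq_of_subset_of_ncard_le hmaps.image_subset
    rw [Set.InjOn.ncard_image hinjon]
    rw [Set.ncard_eq_toFinset_card']
    simp
  exact himg.symm.subset

lemma lower_bound (p r : ℕ) [NeZero p] (hp : 3 ≤ p) (hr : 2 ≤ r) (x₀ : EIdx p r)
    (f : Sym2 (Fin p ⊕ Fin r) → ℕ)
    (hf : IsLocalAntimagic ((JG p r).deleteEdges {edgeOf p r x₀}) f) :
    3 ≤ colorCount ((JG p r).deleteEdges {edgeOf p r x₀}) f := by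
  have hinj := edgeOf_injective p r hp
  have hadj : ∀ x u v, edgeOf p r x = s(u, v) → x ≠ x₀ →
      vertexWeight ((JG p r).deleteEdges {edgeOf p r x₀}) f u ≠
      vertexWeight ((JG p r).deleteEdges {edgeOf p r x₀}) f v := by
    intro x u v hx hne
    apply hf.2
    rw [← mem_edgeSet, edgeSet_deleteEdges, Set.mem_sdiff, edgeOf_range p r hp, ← hx]
    exact ⟨⟨x, rfl⟩, fun h => hne (hinj h)⟩
  -- a triangle avoiding the deleted edge
  have tri : ∃ (i : Fin p) (j : Fin r), (Sum.inl i : EIdx p r) ≠ x₀ ∧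
      (Sum.inr (i, j) : EIdx p r) ≠ x₀ ∧ (Sum.inr (i + 1, j) : EIdx p r) ≠ x₀ := by
    have h01 : (⟨0, by omega⟩ : Fin r) ≠ ⟨1, by omega⟩ := by simp
    have hi : (0 : Fin p) ≠ 1 := by
      intro h
      have := fin_one_val p hp
      rw [← h] at this
      simp at this
    rcases x₀ with k | ⟨k, j⟩
    · by_cases hk : k = 0
      · exact ⟨1, ⟨0, by omega⟩, by simp [hk, hi.symm], by simp, by simp⟩
      · exact ⟨0, ⟨0, by omega⟩, by simp [Ne.symm hk], by simp, by simp⟩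
    · by_cases hj : j = ⟨0, by omega⟩
      · refine ⟨0, ⟨1, by omega⟩, by simp, ?_, ?_⟩ <;> simp [hj]
      · refine ⟨0, ⟨0, by omega⟩, by simp, ?_, ?_⟩ <;> simp [Ne.symm hj]
  obtain ⟨i, j, h1, h2, h3⟩ := tri
  have w1 := hadj _ _ _ rfl h1
  have w2 := hadj _ _ _ rfl h2
  have w3 := hadj _ _ _ rfl h3
  unfold colorCount
  set w := vertexWeight ((JG p r).deleteEdges {edgeOf p r x₀}) f
  calc 3 = ({w (Sum.inl i), w (Sum.inl (i + 1)), w (Sum.inr j)} : Finset ℕ).card := by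
        rw [Finset.card_eq_three.mpr ⟨_, _, _, w1, w2, w3, rfl⟩]
    _ ≤ _ := by
        apply Finset.card_le_card
        intro z hz
        simp only [Finset.mem_insert, Finset.mem_singleton] at hz
        rcases hz with rfl | rfl | rfl <;> exact Finset.mem_image_of_mem _ (Finset.mem_univ _)

/-- A labeling of edge indices (by integers `0 ≤ · < p + p r`) inducing exactly three weights. -/
structure Good (p r : ℕ) [NeZero p] (c : Fin p → ℤ) (L : Fin p → Fin r → ℤ) (P : Fin p → Bool)
    (a b d : ℤ) : Prop where
  injc : ∀ i i', c i = c i' → i = i'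
  injL : ∀ i j i' j', L i j = L i' j' → i = i' ∧ j = j'
  injcL : ∀ i i' j', c i ≠ L i' j'
  c0 : ∀ i, 0 ≤ c i
  c1 : ∀ i, c i < p + p * r
  L0 : ∀ i j, 0 ≤ L i j
  L1 : ∀ i j, L i j < p + p * r
  par : ∀ i, P (i + 1) = !P i
  row : ∀ i, c i + c (i - 1) + ∑ j, L i j = if P i then a else b
  col : ∀ j, ∑ i, L i j = d
  hab : a ≠ b
  had : a ≠ d
  hbd : b ≠ d

theorem Good.chi {p r : ℕ} [NeZero p] (hp : 3 ≤ p) (hr : 2 ≤ r) {c : Fin p → ℤ}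
    {L : Fin p → Fin r → ℤ} {P : Fin p → Bool} {a b d : ℤ} (h : Good p r c L P a b d)
    (x₀ : EIdx p r) (h0 : Sum.elim c (fun x => L x.1 x.2) x₀ = 0) :
    chiLA ((JG p r).deleteEdges {edgeOf p r x₀}) = 3 := by
  set l : EIdx p r → ℕ := fun x => (Sum.elim c (fun x => L x.1 x.2) x).toNat with hl
  have hc : ∀ i, ((l (Sum.inl i) : ℕ) : ℤ) = c i := fun i => by
    simp [hl, h.c0 i]
  have hL : ∀ i j, ((l (Sum.inr (i, j)) : ℕ) : ℤ) = L i j := fun i j => by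
    simp [hl, h.L0 i j]
  have hl0 : l x₀ = 0 := by simp [hl, h0]
  have hlinj : Function.Injective l := by
    rintro (i | ⟨i, j⟩) (k | ⟨k, s⟩) he
    · rw [h.injc i k (by rw [← hc, ← hc, he])]
    · exact absurd (by rw [← hc, ← hL, he]) (h.injcL i k s)
    · exact absurd (by rw [← hc, ← hL, he]) (h.injcL k i j)
    · obtain ⟨h1, h2⟩ := h.injL i j k s (by rw [← hL, ← hL, he])
      rw [h1, h2]
  have hlb : ∀ x, l x < p + p * r := by
    rintro (i | ⟨i, j⟩)
    · have := h.c1 i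
      rw [← hc] at this
      exact_mod_cast this
    · have := h.L1 i j
      rw [← hL] at this
      exact_mod_cast this
  have hw1 : ∀ i, ((vertexWeight ((JG p r).deleteEdges {edgeOf p r x₀}) (extLabel p r l)
      (Sum.inl i) : ℕ) : ℤ) = if P i then a else b := by
    intro i
    rw [weight_inl p r hp l x₀ hl0, ← h.row i]
    push_cast
    simp only [hc, hL]
  have hw2 : ∀ j, ((vertexWeight ((JG p r).deleteEdges {edgeOf p r x₀}) (extLabel p r l)
      (Sum.inr j) : ℕ) : ℤ) = d := by
    intro j
    rw [weight_inr p r hp l x₀ hl0, ← h.col j]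
    push_cast
    simp only [hL]
  have hla : IsLocalAntimagic ((JG p r).deleteEdges {edgeOf p r x₀}) (extLabel p r l) := by
    refine ⟨bij_label p r hp l x₀ hl0 hlinj hlb, ?_⟩
    have key : ∀ x u v, edgeOf p r x = s(u, v) →
      vertexWeight ((JG p r).deleteEdges {edgeOf p r x₀}) (extLabel p r l) u ≠
      vertexWeight ((JG p r).deleteEdges {edgeOf p r x₀}) (extLabel p r l) v := by
      have k1 : ∀ i : Fin p,
        vertexWeight ((JG p r).deleteEdges {edgeOf p r x₀}) (extLabel p r l) (Sum.inl i) ≠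
        vertexWeight ((JG p r).deleteEdges {edgeOf p r x₀}) (extLabel p r l)
          (Sum.inl (i + 1)) := by
        intro i he
        have he' := congrArg (fun z : ℕ => (z : ℤ)) he
        simp only [hw1, h.par] at he'
        have := h.hab
        cases hP : P i <;> simp [hP] at he' <;> omega
      have k2 : ∀ (i : Fin p) (j : Fin r),
        vertexWeight ((JG p r).deleteEdges {edgeOf p r x₀}) (extLabel p r l) (Sum.inl i) ≠
        vertexWeight ((JG p r).deleteEdges {edgeOf p r x₀}) (extLabel p r l)
          (Sum.inr j) := by
        intro i j he
        have he' := congrArg (fun z : ℕ => (z : ℤ)) he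
        simp only [hw1, hw2] at he'
        have := h.had
        have := h.hbd
        cases hP : P i <;> simp [hP] at he' <;> omega
      rintro (i | ⟨i, j⟩) u v hx <;> simp only [edgeOf, Sym2.eq_iff] at hx <;>
        rcases hx with ⟨rfl, rfl⟩ | ⟨rfl, rfl⟩
      · exact k1 _
      · exact (k1 _).symm
      · exact k2 _ _
      · exact (k2 _ _).symm
    intro u v huv
    rw [← mem_edgeSet, edgeSet_deleteEdges, Set.mem_sdiff, edgeOf_range p r hp] at huv
    obtain ⟨⟨x, hx⟩, -⟩ := huv
    exact key x u v hx
  have hcount : colorCount ((JG p r).deleteEdges {edgeOf p r x₀}) (extLabel p r l) ≤ 3 := by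
    unfold colorCount
    calc _ ≤ ({a.toNat, b.toNat, d.toNat} : Finset ℕ).card := by
          apply Finset.card_le_card
          intro z hz
          obtain ⟨v, -, rfl⟩ := Finset.mem_image.mp hz
          rcases v with i | j
          · have := hw1 i
            cases hP : P i <;> simp [hP] at this <;> simp [← this]
          · have := hw2 j
            simp [← this]
      _ ≤ 3 := Finset.card_le_three
  have hcount3 := le_antisymm hcount (lower_bound p r hp hr x₀ _ hla)
  unfold chiLA
  apply le_antisymm
  · exact Nat.sInf_le ⟨_, hla, hcount3⟩
  · refine le_csInf ⟨3, ⟨_, hla, hcount3⟩⟩ ?_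
    rintro k ⟨f, hf, rfl⟩
    exact lower_bound p r hp hr x₀ f hf

/-- Rotating the cycle and permuting the columns. -/
theorem Good.shift {p r : ℕ} [NeZero p] {c : Fin p → ℤ}
    {L : Fin p → Fin r → ℤ} {P : Fin p → Bool} {a b d : ℤ} (h : Good p r c L P a b d)
    (k : Fin p) (σ : Equiv.Perm (Fin r)) :
    Good p r (fun i => c (i + k)) (fun i j => L (i + k) (σ j)) (fun i => P (i + k)) a b d where
  injc i i' e := add_right_cancel (h.injc _ _ e)
  injL i j i' j' e := ⟨add_right_cancel (h.injL _ _ _ _ e).1, σ.injective (h.injL _ _ _ _ e).2⟩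
  injcL i i' j' := h.injcL _ _ _
  c0 i := h.c0 _
  c1 i := h.c1 _
  L0 i j := h.L0 _ _
  L1 i j := h.L1 _ _
  par i := by rw [← h.par]; congr 1; abel
  row i := by
    rw [← h.row, Equiv.sum_comp σ (fun j => L (i + k) j)]
    congr 3; abel
  col j := by
    rw [← h.col (σ j)]
    exact Equiv.sum_comp (Equiv.addRight k) (fun i => L i (σ j))
  hab := h.hab
  had := h.had
  hbd := h.hbd

/-- Complementing the labels. -/
theorem Good.compl {p r : ℕ} [NeZero p] {c : Fin p → ℤ}
    {L : Fin p → Fin r → ℤ} {P : Fin p → Bool} {a b d : ℤ} (h : Good p r c L P a b d)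
    (K : ℤ) (hK : K = p + p * r - 1)
    (h1 : (r + 2) * K - a ≠ p * K - d) (h2 : (r + 2) * K - b ≠ p * K - d) :
    Good p r (fun i => K - c i) (fun i j => K - L i j) P
      ((r + 2) * K - a) ((r + 2) * K - b) (p * K - d) where
  injc i i' e := h.injc _ _ (by linarith)
  injL i j i' j' e := h.injL _ _ _ _ (by linarith)
  injcL i i' j' e := h.injcL i i' j' (by linarith)
  c0 i := by have := h.c1 i; omega
  c1 i := by have := h.c0 i; omega
  L0 i j := by have := h.L1 i j; omega
  L1 i j := by have := h.L0 i j; omega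
  par i := h.par i
  row i := by
    have := h.row i
    rw [Finset.sum_sub_distrib]
    simp only [Finset.sum_const, Finset.card_univ, Fintype.card_fin, nsmul_eq_mul]
    split_ifs at this ⊢ <;> linarith
  col j := by
    have := h.col j
    rw [Finset.sum_sub_distrib]
    simp only [Finset.sum_const, Finset.card_univ, Fintype.card_fin, nsmul_eq_mul]
    linarith
  hab := by have := h.hab; intro e; apply this; linarith
  had := h1
  hbd := h2

lemma sum_split (N : ℕ) (F : ℕ → ℤ) :
    ∑ j ∈ Finset.range (2 * N + 3), F j =
      F 0 + F (2 * N + 2) + F (N + 1) + ∑ t ∈ Finset.range N, (F (1 + t) + F (2 * N + 1 - t)) := by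
  rw [Finset.sum_range_succ, Finset.sum_range_succ']
  have h1 : ∑ k ∈ Finset.range (2 * N + 1), F (k + 1) =
      ∑ k ∈ Finset.range N, F (1 + k) + F (N + 1) + ∑ k ∈ Finset.range N, F (2 * N + 1 - k) := by
    rw [show 2 * N + 1 = (N + 1) + N by ring, Finset.sum_range_add, Finset.sum_range_succ]
    congr 1
    · congr 1
      exact Finset.sum_congr rfl fun k _ => by rw [add_comm]
    · rw [← Finset.sum_range_reflect]
      apply Finset.sum_congr rfl
      intro k hk
      have := Finset.mem_range.mp hk
      congr 1
      omega
  rw [h1, Finset.sum_add_distrib]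
  ring

lemma sum_pairs (m : ℕ) (F : ℕ → ℤ) :
    ∑ i ∈ Finset.range (2 * m), F i = ∑ k ∈ Finset.range m, (F (2 * k) + F (2 * k + 1)) := by
  induction m with
  | zero => simp
  | succ m ih =>
    rw [show 2 * (m + 1) = 2 * m + 1 + 1 by ring, Finset.sum_range_succ, Finset.sum_range_succ, ih,
      Finset.sum_range_succ]
    ring

lemma gauss_int (m : ℕ) : 2 * ∑ k ∈ Finset.range m, (k : ℤ) = m * (m - 1) := by
  induction m with
  | zero => simp
  | succ m ih => rw [Finset.sum_range_succ, mul_add, ih]; push_cast; ring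

/-- Labels of the cycle edges. -/
def cB (m i : ℕ) : ℤ := if i % 2 = 0 then ((i / 2 : ℕ) : ℤ) else 2 * m - 1 - ((i / 2 : ℕ) : ℤ)

/-- Residue (mod `2m`) part of the spoke labels: block `b`, cycle vertex `i`. -/
def rB (m n b i : ℕ) : ℤ :=
  if i % 2 = 0 then
    if b = n then 2 * m - 1 - 2 * ((i / 2 : ℕ) : ℤ)
    else if b < n then m + ((i / 2 : ℕ) : ℤ)
    else if b = 2 * n - 1 then
      (if i / 2 = 0 then 2 * m - 1 else m + ((i / 2 : ℕ) : ℤ) - 1)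
    else 2 * m - 1 - ((i / 2 : ℕ) : ℤ)
  else
    if b = n then 2 * m - 2 - 2 * ((i / 2 : ℕ) : ℤ)
    else if b < n ∨ b = 2 * n - 1 then ((i / 2 : ℕ) : ℤ)
    else m - 1 - ((i / 2 : ℕ) : ℤ)

/-- The block used at cycle vertex `i` and column `j`. -/
def blk (n i j : ℕ) : ℕ := if i % 2 = 0 then 2 * n - 1 - j else j + 1

/-- Labels of the spokes. -/
def LB (m n i j : ℕ) : ℤ := 2 * m * (blk n i j : ℤ) + rB m n (blk n i j) i

lemma rB_bound (m n b i : ℕ) (hi : i < 2 * m) : 0 ≤ rB m n b i ∧ rB m n b i < 2 * m := by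
  unfold rB
  split_ifs <;> omega

lemma rB_inj (m n b i i' : ℕ) (hi : i < 2 * m) (hi' : i' < 2 * m)
    (h : rB m n b i = rB m n b i') : i = i' := by
  unfold rB at h
  split_ifs at h <;> omega

lemma cB_bound (m i : ℕ) (hi : i < 2 * m) : 0 ≤ cB m i ∧ cB m i < 2 * m := by
  unfold cB
  split_ifs <;> omega

lemma cB_inj (m i i' : ℕ) (hi : i < 2 * m) (hi' : i' < 2 * m) (h : cB m i = cB m i') : i = i' := by
  unfold cB at h
  split_ifs at h <;> omega

lemma blk_bound (n i j : ℕ) (hj : j < 2 * n - 1) : 1 ≤ blk n i j ∧ blk n i j ≤ 2 * n - 1 := by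
  unfold blk
  split_ifs <;> omega

lemma block_unique (m : ℕ) (b b' r r' : ℤ) (h0 : 0 ≤ r) (h1 : r < 2 * m)
    (h0' : 0 ≤ r') (h1' : r' < 2 * m) (h : 2 * m * b + r = 2 * m * b' + r') :
    b = b' ∧ r = r' := by
  have hb : b = b' := by
    rcases lt_trichotomy b b' with hl | hl | hl
    · nlinarith [mul_le_mul_of_nonneg_left (show b + 1 ≤ b' from hl) (show (0 : ℤ) ≤ 2 * m by positivity)]
    · exact hl
    · nlinarith [mul_le_mul_of_nonneg_left (show b' + 1 ≤ b from hl) (show (0 : ℤ) ≤ 2 * m by positivity)]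
  subst hb
  exact ⟨rfl, by linarith⟩

lemma LB_inj (m n i j i' j' : ℕ) (hi : i < 2 * m) (hi' : i' < 2 * m) (hj : j < 2 * n - 1)
    (hj' : j' < 2 * n - 1) (h : LB m n i j = LB m n i' j') : i = i' ∧ j = j' := by
  unfold LB at h
  have b1 := rB_bound m n (blk n i j) i hi
  have b2 := rB_bound m n (blk n i' j') i' hi'
  obtain ⟨hb, hr⟩ := block_unique m _ _ _ _ b1.1 b1.2 b2.1 b2.2 h
  have hb' : blk n i j = blk n i' j' := by exact_mod_cast hb
  rw [← hb'] at hr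
  have hii := rB_inj m n _ i i' hi hi' hr
  subst hii
  refine ⟨rfl, ?_⟩
  unfold blk at hb'
  split_ifs at hb' <;> omega

lemma LB_bound (m n i j : ℕ) (hi : i < 2 * m) (hj : j < 2 * n - 1) :
    2 * (m : ℤ) ≤ LB m n i j ∧ LB m n i j < 4 * m * n := by
  have b1 := rB_bound m n (blk n i j) i hi
  have b2 := blk_bound n i j hj
  have b3 : (1 : ℤ) ≤ (blk n i j : ℤ) := by exact_mod_cast b2.1
  have b4 : (blk n i j : ℤ) ≤ 2 * n - 1 := by omega
  unfold LB
  have hm : (0 : ℤ) ≤ 2 * m := by positivity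
  constructor
  · nlinarith [mul_le_mul_of_nonneg_left b3 hm]
  · nlinarith [mul_le_mul_of_nonneg_left b4 hm]

lemma row_even (m N i : ℕ) (hi : i < 2 * m) (he : i % 2 = 0) :
    ∑ j ∈ Finset.range (2 * N + 3), LB m (N + 2) i j =
      2 * m * (N + 2) * (2 * N + 3) + (if i = 0 then 5 * (m : ℤ) - 2 else 4 * (m : ℤ) - 2) +
        N * (3 * m - 1) := by
  rw [sum_split]
  have h1 : blk (N + 2) i 0 = 2 * N + 3 := by unfold blk; split_ifs; omega
  have h2 : blk (N + 2) i (2 * N + 2) = 1 := by unfold blk; split_ifs; omega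
  have h3 : blk (N + 2) i (N + 1) = N + 2 := by unfold blk; split_ifs; omega
  have r1 : rB m (N + 2) (2 * N + 3) i + rB m (N + 2) 1 i + rB m (N + 2) (N + 2) i =
      (if i = 0 then 5 * (m : ℤ) - 2 else 4 * (m : ℤ) - 2) := by
    unfold rB
    split_ifs <;> omega
  have h4 : ∀ t ∈ Finset.range N, LB m (N + 2) i (1 + t) + LB m (N + 2) i (2 * N + 1 - t) =
      2 * m * (2 * (N + 2)) + (3 * m - 1) := by
    intro t ht
    have ht := Finset.mem_range.mp ht
    have h5 : blk (N + 2) i (1 + t) = 2 * N + 2 - t := by unfold blk; split_ifs; omega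
    have h6 : blk (N + 2) i (2 * N + 1 - t) = t + 2 := by unfold blk; split_ifs; omega
    have r2 : rB m (N + 2) (2 * N + 2 - t) i + rB m (N + 2) (t + 2) i = 3 * m - 1 := by
      unfold rB
      split_ifs <;> omega
    unfold LB
    rw [h5, h6, ← r2]
    have : ((2 * N + 2 - t : ℕ) : ℤ) = 2 * N + 2 - t := by omega
    rw [this]
    push_cast
    ring
  rw [Finset.sum_congr rfl h4, Finset.sum_const, Finset.card_range, ← r1]
  unfold LB
  rw [h1, h2, h3]
  push_cast
  rw [nsmul_eq_mul]
  ring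

lemma row_odd (m N i : ℕ) (hi : i < 2 * m) (he : i % 2 = 1) :
    ∑ j ∈ Finset.range (2 * N + 3), LB m (N + 2) i j =
      2 * m * (N + 2) * (2 * N + 3) + (2 * m - 2) + N * (m - 1) := by
  rw [sum_split]
  have h1 : blk (N + 2) i 0 = 1 := by unfold blk; split_ifs <;> omega
  have h2 : blk (N + 2) i (2 * N + 2) = 2 * N + 3 := by unfold blk; split_ifs <;> omega
  have h3 : blk (N + 2) i (N + 1) = N + 2 := by unfold blk; split_ifs <;> omega
  have r1 : rB m (N + 2) (2 * N + 3) i + rB m (N + 2) 1 i + rB m (N + 2) (N + 2) i =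
      2 * m - 2 := by
    unfold rB
    split_ifs <;> omega
  have h4 : ∀ t ∈ Finset.range N, LB m (N + 2) i (1 + t) + LB m (N + 2) i (2 * N + 1 - t) =
      2 * m * (2 * (N + 2)) + (m - 1) := by
    intro t ht
    have ht := Finset.mem_range.mp ht
    have h5 : blk (N + 2) i (1 + t) = t + 2 := by unfold blk; split_ifs <;> omega
    have h6 : blk (N + 2) i (2 * N + 1 - t) = 2 * N + 2 - t := by unfold blk; split_ifs <;> omega
    have r2 : rB m (N + 2) (2 * N + 2 - t) i + rB m (N + 2) (t + 2) i = m - 1 := by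
      unfold rB
      split_ifs <;> omega
    unfold LB
    rw [h5, h6, ← r2]
    have : ((2 * N + 2 - t : ℕ) : ℤ) = 2 * N + 2 - t := by omega
    rw [this]
    push_cast
    ring
  rw [Finset.sum_congr rfl h4, Finset.sum_const, Finset.card_range, ← r1]
  unfold LB
  rw [h1, h2, h3]
  push_cast
  rw [nsmul_eq_mul]
  ring

lemma col_sum (m n j : ℕ) (hm : 2 ≤ m) (hn : 2 ≤ n) (hj : j < 2 * n - 1) :
    ∑ i ∈ Finset.range (2 * m), LB m n i j = 4 * m * m * n + m * (2 * m - 1) := by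
  rw [sum_pairs]
  have hb : ∀ k, LB m n (2 * k) j + LB m n (2 * k + 1) j =
      4 * m * n + (rB m n (2 * n - 1 - j) (2 * k) + rB m n (j + 1) (2 * k + 1)) := by
    intro k
    have h1 : blk n (2 * k) j = 2 * n - 1 - j := by unfold blk; split_ifs <;> omega
    have h2 : blk n (2 * k + 1) j = j + 1 := by unfold blk; split_ifs <;> omega
    unfold LB
    rw [h1, h2]
    have : ((2 * n - 1 - j : ℕ) : ℤ) = 2 * n - 1 - j := by omega
    rw [this]
    push_cast
    ring
  simp only [hb]
  rw [Finset.sum_add_distrib, Finset.sum_const, Finset.card_range, nsmul_eq_mul]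
  have key : ∑ k ∈ Finset.range m,
      (rB m n (2 * n - 1 - j) (2 * k) + rB m n (j + 1) (2 * k + 1)) = m * (2 * m - 1) := by
    have hg := gauss_int m
    by_cases c1 : j + 1 = n
    · have : ∀ k ∈ Finset.range m, rB m n (2 * n - 1 - j) (2 * k) + rB m n (j + 1) (2 * k + 1) =
          (4 * m - 3 : ℤ) - 4 * k := by
        intro k _
        unfold rB
        split_ifs <;> omega
      rw [Finset.sum_congr rfl this, Finset.sum_sub_distrib, ← Finset.mul_sum, Finset.sum_const,
        Finset.card_range, nsmul_eq_mul]
      linarith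
    by_cases c2 : j = 2 * n - 2
    · have : ∀ k ∈ Finset.range m, rB m n (2 * n - 1 - j) (2 * k) + rB m n (j + 1) (2 * k + 1) =
          (m : ℤ) + 2 * k := by
        intro k _
        unfold rB
        split_ifs <;> omega
      rw [Finset.sum_congr rfl this, Finset.sum_add_distrib, ← Finset.mul_sum, Finset.sum_const,
        Finset.card_range, nsmul_eq_mul]
      linarith
    by_cases c3 : j = 0
    · have : ∀ k ∈ Finset.range m, rB m n (2 * n - 1 - j) (2 * k) + rB m n (j + 1) (2 * k + 1) =
          ((m : ℤ) - 1 + 2 * k) + (if k = 0 then (m : ℤ) else 0) := by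
        intro k _
        unfold rB
        split_ifs <;> omega
      rw [Finset.sum_congr rfl this, Finset.sum_add_distrib, Finset.sum_add_distrib,
        ← Finset.mul_sum, Finset.sum_const, Finset.card_range, nsmul_eq_mul, Finset.sum_ite_eq',
        if_pos (Finset.mem_range.mpr (by omega))]
      linarith
    · have : ∀ k ∈ Finset.range m, rB m n (2 * n - 1 - j) (2 * k) + rB m n (j + 1) (2 * k + 1) =
          (2 * m - 1 : ℤ) := by
        intro k _
        unfold rB
        split_ifs <;> omega
      rw [Finset.sum_congr rfl this, Finset.sum_const, Finset.card_range, nsmul_eq_mul]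
  rw [key]
  ring

lemma fin_pred_val (p : ℕ) [NeZero p] (hp : 3 ≤ p) (i : Fin p) :
    ((i - 1 : Fin p) : ℕ) = if (i : ℕ) = 0 then p - 1 else (i : ℕ) - 1 := by
  have e := fin_succ_val p hp (i - 1)
  rw [sub_add_cancel] at e
  have := (i - 1).2
  have := i.2
  split_ifs at e ⊢ <;> omega

/-- even-row weight -/
def wA (m n : ℤ) : ℤ := 2 * m * n * (2 * n - 1) + (6 * m - 2) + (n - 2) * (3 * m - 1)
/-- odd-row weight -/
def wB (m n : ℤ) : ℤ := 2 * m * n * (2 * n - 1) + (4 * m - 3) + (n - 2) * (m - 1)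
/-- column weight -/
def wD (m n : ℤ) : ℤ := 4 * m * m * n + m * (2 * m - 1)

lemma wAB (m n : ℤ) (hm : 2 ≤ m) (hn : 2 ≤ n) : wA m n ≠ wB m n := by
  unfold wA wB
  intro h
  nlinarith [mul_nonneg (show 0 ≤ n - 2 by linarith) (show 0 ≤ m by linarith)]

lemma wAD (m n : ℤ) (hm : 2 ≤ m) (hn : 2 ≤ n) : wA m n ≠ wD m n := by
  unfold wA wD
  intro h
  rcases lt_trichotomy m n with hl | hl | hl
  · obtain ⟨s, rfl⟩ : ∃ s, n = m + 1 + s := ⟨n - m - 1, by ring⟩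
    have hs : 0 ≤ s := by linarith
    obtain ⟨u, rfl⟩ : ∃ u, m = 2 + u := ⟨m - 2, by ring⟩
    have hu : 0 ≤ u := by linarith
    nlinarith [mul_nonneg hs hu, mul_nonneg hs hs, mul_nonneg hu hu, mul_nonneg (mul_nonneg hs hs) hu, mul_nonneg (mul_nonneg hs hu) hu]
  · subst hl
    nlinarith
  · obtain ⟨s, rfl⟩ : ∃ s, m = n + 1 + s := ⟨m - n - 1, by ring⟩
    have hs : 0 ≤ s := by linarith
    obtain ⟨u, rfl⟩ : ∃ u, n = 2 + u := ⟨n - 2, by ring⟩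
    have hu : 0 ≤ u := by linarith
    nlinarith [mul_nonneg hs hu, mul_nonneg hs hs, mul_nonneg hu hu, mul_nonneg (mul_nonneg hs hs) hu, mul_nonneg (mul_nonneg hs hu) hu]

lemma wBD (m n : ℤ) (hm : 2 ≤ m) (hn : 2 ≤ n) : wB m n ≠ wD m n := by
  unfold wB wD
  intro h
  rcases lt_trichotomy m n with hl | hl | hl
  · obtain ⟨s, rfl⟩ : ∃ s, n = m + 1 + s := ⟨n - m - 1, by ring⟩
    have hs : 0 ≤ s := by linarith
    obtain ⟨u, rfl⟩ : ∃ u, m = 2 + u := ⟨m - 2, by ring⟩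
    have hu : 0 ≤ u := by linarith
    nlinarith [mul_nonneg hs hu, mul_nonneg hs hs, mul_nonneg hu hu, mul_nonneg (mul_nonneg hs hs) hu, mul_nonneg (mul_nonneg hs hu) hu]
  · subst hl
    nlinarith
  · obtain ⟨s, rfl⟩ : ∃ s, m = n + 1 + s := ⟨m - n - 1, by ring⟩
    have hs : 0 ≤ s := by linarith
    obtain ⟨u, rfl⟩ : ∃ u, n = 2 + u := ⟨n - 2, by ring⟩
    have hu : 0 ≤ u := by linarith
    nlinarith [mul_nonneg hs hu, mul_nonneg hs hs, mul_nonneg hu hu, mul_nonneg (mul_nonneg hs hs) hu, mul_nonneg (mul_nonneg hs hu) hu]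

lemma cAD (m n : ℤ) (hm : 2 ≤ m) (hn : 2 ≤ n) :
    (2 * n + 1) * (4 * m * n - 1) - wA m n ≠ 2 * m * (4 * m * n - 1) - wD m n := by
  unfold wA wD
  intro h
  rcases lt_or_ge m (n + 2) with hl | hl
  · obtain ⟨s, rfl⟩ : ∃ s, n = m - 1 + s := ⟨n - m + 1, by ring⟩
    have hs : 0 ≤ s := by linarith
    obtain ⟨u, rfl⟩ : ∃ u, m = 2 + u := ⟨m - 2, by ring⟩
    have hu : 0 ≤ u := by linarith
    nlinarith [mul_nonneg hs hu, mul_nonneg hs hs, mul_nonneg hu hu, mul_nonneg (mul_nonneg hs hs) hu, mul_nonneg (mul_nonneg hs hu) hu]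
  rcases eq_or_lt_of_le hl with hl | hl
  · subst hl
    have h' : n * (3 * n + 2) = 9 := by linarith
    have : n < 2 := by nlinarith
    omega
  · obtain ⟨s, rfl⟩ : ∃ s, m = n + 3 + s := ⟨m - n - 3, by ring⟩
    have hs : 0 ≤ s := by linarith
    obtain ⟨u, rfl⟩ : ∃ u, n = 2 + u := ⟨n - 2, by ring⟩
    have hu : 0 ≤ u := by linarith
    nlinarith [mul_nonneg hs hu, mul_nonneg hs hs, mul_nonneg hu hu, mul_nonneg (mul_nonneg hs hs) hu, mul_nonneg (mul_nonneg hs hu) hu]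

lemma cBD (m n : ℤ) (hm : 2 ≤ m) (hn : 2 ≤ n) :
    (2 * n + 1) * (4 * m * n - 1) - wB m n ≠ 2 * m * (4 * m * n - 1) - wD m n := by
  unfold wB wD
  intro h
  rcases lt_or_ge m (n + 2) with hl | hl
  · obtain ⟨s, rfl⟩ : ∃ s, n = m - 1 + s := ⟨n - m + 1, by ring⟩
    have hs : 0 ≤ s := by linarith
    obtain ⟨u, rfl⟩ : ∃ u, m = 2 + u := ⟨m - 2, by ring⟩
    have hu : 0 ≤ u := by linarith
    nlinarith [mul_nonneg hs hu, mul_nonneg hs hs, mul_nonneg hu hu, mul_nonneg (mul_nonneg hs hs) hu, mul_nonneg (mul_nonneg hs hu) hu]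
  rcases eq_or_lt_of_le hl with hl | hl
  · subst hl
    have h' : n * n = 6 := by linarith
    have : n < 3 := by nlinarith
    have : n = 2 := by omega
    subst this
    omega
  · obtain ⟨s, rfl⟩ : ∃ s, m = n + 3 + s := ⟨m - n - 3, by ring⟩
    have hs : 0 ≤ s := by linarith
    obtain ⟨u, rfl⟩ : ∃ u, n = 2 + u := ⟨n - 2, by ring⟩
    have hu : 0 ≤ u := by linarith
    nlinarith [mul_nonneg hs hu, mul_nonneg hs hs, mul_nonneg hu hu, mul_nonneg (mul_nonneg hs hs) hu, mul_nonneg (mul_nonneg hs hu) hu]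

theorem good_base (m n : ℕ) (hm : 2 ≤ m) (hn : 2 ≤ n) [NeZero (2 * m)] :
    Good (2 * m) (2 * n - 1) (fun i => cB m i) (fun i j => LB m n i j)
      (fun i => decide ((i : ℕ) % 2 = 0)) (wA m n) (wB m n) (wD m n) := by
  have hq : ((2 * m : ℕ) : ℤ) + ((2 * m : ℕ) : ℤ) * ((2 * n - 1 : ℕ) : ℤ) = 4 * m * n := by
    have : ((2 * n - 1 : ℕ) : ℤ) = 2 * n - 1 := by omega
    rw [this]
    push_cast
    ring
  have hmz : (2 : ℤ) ≤ m := by exact_mod_cast hm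
  have hnz : (2 : ℤ) ≤ n := by exact_mod_cast hn
  refine ⟨?_, ?_, ?_, ?_, ?_, ?_, ?_, ?_, ?_, ?_, wAB _ _ hmz hnz, wAD _ _ hmz hnz,
    wBD _ _ hmz hnz⟩
  · intro i i' h
    exact Fin.ext (cB_inj m i i' i.2 i'.2 h)
  · intro i j i' j' h
    have := LB_inj m n i j i' j' i.2 i'.2 j.2 j'.2 h
    exact ⟨Fin.ext this.1, Fin.ext this.2⟩
  · intro i i' j' h
    have h1 := cB_bound m i i.2
    have h2 := LB_bound m n i' j' i'.2 j'.2
    linarith [h1.2, h2.1]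
  · exact fun i => (cB_bound m i i.2).1
  · intro i
    rw [hq]
    have := (cB_bound m i i.2).2
    nlinarith
  · intro i j
    have := (LB_bound m n i j i.2 j.2).1
    linarith
  · intro i j
    rw [hq]
    exact (LB_bound m n i j i.2 j.2).2
  · intro i
    simp only [fin_succ_val (2 * m) (by omega) i]
    rw [← decide_not, decide_eq_decide]
    have := i.2
    split_ifs <;> omega
  · intro i
    simp only [fin_pred_val (2 * m) (by omega) i, decide_eq_true_eq]
    rw [Fin.sum_univ_eq_sum_range (fun j => LB m n i j)]
    obtain ⟨N, rfl⟩ : ∃ N, n = N + 2 := ⟨n - 2, by omega⟩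
    rw [show 2 * (N + 2) - 1 = 2 * N + 3 by omega]
    have hi := i.2
    split_ifs with h0 h1 h1
    · rw [row_even m N i hi h1, if_pos h0]
      have : cB m (i : ℕ) + cB m (2 * m - 1) = m := by
        unfold cB
        split_ifs <;> omega
      rw [this]
      unfold wA
      push_cast
      ring
    · omega
    · rw [row_even m N i hi h1, if_neg h0]
      have : cB m (i : ℕ) + cB m (i - 1 : ℕ) = 2 * m := by
        unfold cB
        split_ifs <;> omega
      rw [this]
      unfold wA
      push_cast
      ring
    · rw [row_odd m N i hi (by omega)]
      have : cB m (i : ℕ) + cB m (i - 1 : ℕ) = 2 * m - 1 := by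
        unfold cB
        split_ifs <;> omega
      rw [this]
      unfold wB
      push_cast
      ring
  · intro j
    rw [Fin.sum_univ_eq_sum_range (fun i => LB m n i j)]
    rw [col_sum m n j hm hn j.2]
    rfl

/-- Theorem: For all integers `m, n ≥ 2` and every edge `e` of `C_{2m} ∨ O_{2n−1}`,
`χ_la((C_{2m} ∨ O_{2n−1}) − e) = 3`. -/
theorem chiLA_evenCycle_join_null_odd_deleteEdge (m n : ℕ) (hm : 2 ≤ m) (hn : 2 ≤ n)
    (e : Sym2 (Fin (2 * m) ⊕ Fin (2 * n - 1)))
    (he : e ∈ (joinG (cycleGraph (2 * m)) (⊥ : SimpleGraph (Fin (2 * n - 1)))).edgeSet) :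
    chiLA ((joinG (cycleGraph (2 * m)) (⊥ : SimpleGraph (Fin (2 * n - 1)))).deleteEdges
      {e}) = 3 := by
  haveI : NeZero (2 * m) := ⟨by omega⟩
  have hp : 3 ≤ 2 * m := by omega
  have hr : 2 ≤ 2 * n - 1 := by omega
  have hmz : (2 : ℤ) ≤ m := by exact_mod_cast hm
  have hnz : (2 : ℤ) ≤ n := by exact_mod_cast hn
  have hrz : ((2 * n - 1 : ℕ) : ℤ) = 2 * n - 1 := by omega
  have g := good_base m n hm hn
  obtain ⟨x, rfl⟩ := (edgeOf_range (2 * m) (2 * n - 1) hp e).mp he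
  rcases x with i | ⟨i, j⟩
  · refine (g.shift (-i) (Equiv.refl _)).chi hp hr _ ?_
    simp [cB]
  · have g2 := g.compl (4 * m * n - 1) (by rw [hrz]; push_cast; ring)
      (by
        have := cAD m n hmz hnz
        rw [hrz]
        intro h
        apply this
        push_cast at h
        linarith)
      (by
        have := cBD m n hmz hnz
        rw [hrz]
        intro h
        apply this
        push_cast at h
        linarith)
    refine (g2.shift (-i) (Equiv.swap j ⟨0, by omega⟩)).chi hp hr _ ?_
    have hb : blk n 0 0 = 2 * n - 1 := by simp [blk]
    have hR : rB m n (2 * n - 1) 0 = 2 * m - 1 := by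
      unfold rB
      split_ifs <;> omega
    simp only [Sum.elim_inr, add_neg_cancel, Equiv.swap_apply_left, Fin.val_zero, LB, hb, hR, hrz]
    ring
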